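/- (Mixed difference-differential equation for family V with (p,q,m) = (0,0,1).) Let λ, μ ∈ ℂ and for n ∈ ℕ set F_n(x) = ₂F₀(1−λ−n, μ+n; —; x) = Σ_{k≥0} (1−λ−n)_k·(μ+n)_k · x^k/k! ∈ ℂ[[x]]. Assume that (2n+λ+μ)(2n+λ+μ−1)(2n+λ+μ−2) ≠ 0 for every integer n ≥ 1. Then for every integer n ≥ 1, the identity −x²·F_n'(x) = ((n+μ)(n+λ−1)/((2n+λ+μ)(2n+λ+μ−1)))·F_{n+1}(x) − (2(n+μ)(n+λ−1)/((2n+λ+μ)(2n+λ+μ−2)))·F_n(x) + ((n+μ)(n+λ−1)/((2n+λ+μ−1)(2n+λ+μ−2)))·F_{n−1}(x) holds in ℂ[[x]], where ' denotes the formal derivative with respect to x. -/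

import Mathlib

noncomputable section

open PowerSeries

/-- Pochhammer symbol `(a)_k = a (a+1) ⋯ (a+k-1)`, with `(a)_0 = 1`. -/
def poch (a : ℂ) : ℕ → ℂ
  | 0 => 1
  | k + 1 => poch a k * (a + k)

/-- `F_n(x) = ₂F₀(1−λ−n, μ+n; —; x) = Σ_{k≥0} (1−λ−n)_k (μ+n)_k x^k/k!`. -/
def Fser (lam mu : ℂ) (n : ℕ) : PowerSeries ℂ :=
  PowerSeries.mk fun k =>
    poch (1 - lam - n) k * poch (mu + n) k / (Nat.factorial k : ℂ)

/-!
Write `F(a, b) = ₂F₀(a, b; —; x)`. Comparing coefficients gives the contiguous relation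
`F(a + 1, b) - F(a, b + 1) = (b - a) x F(a + 1, b + 1)`. Hence both increments of
`F(a - 1, b + 1), F(a, b), F(a + 1, b - 1)` are multiples of `x` times `F(a, b + 1)` and
`F(a + 1, b)`, and once they are suitably weighted their difference is, by the relation again,
a multiple of `x² F(a + 1, b + 1)`. The mixed relation follows because
`F(a, b)' = a b F(a + 1, b + 1)`.
-/

lemma ascPochhammer_succ_eval_left {R : Type*} [CommSemiring R] (a : R) (k : ℕ) :
    (ascPochhammer R (k + 1)).eval a = a * (ascPochhammer R k).eval (a + 1) := by
  simp [ascPochhammer_succ_left]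

section HypergeometricTwoFZero

variable {K : Type*} [Field K]

/-- The formal hypergeometric series `₂F₀(a, b; —; x)`, with its coefficients written as in
Mathlib's `ordinaryHypergeometricCoefficient`. -/
def twoFZero (a b : K) : K⟦X⟧ :=
  mk fun k => (k.factorial : K)⁻¹ * (ascPochhammer K k).eval a * (ascPochhammer K k).eval b

lemma coeff_twoFZero (a b : K) (k : ℕ) :
    coeff k (twoFZero a b) =
      (k.factorial : K)⁻¹ * (ascPochhammer K k).eval a * (ascPochhammer K k).eval b :=
  coeff_mk _ _

variable [CharZero K]

lemma derivative_twoFZero (a b : K) :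
    d⁄dX K (twoFZero a b) = (a * b) • twoFZero (a + 1) (b + 1) := by
  ext k
  rw [coeff_derivative, coeff_smul, smul_eq_mul, coeff_twoFZero, coeff_twoFZero,
    ascPochhammer_succ_eval_left, ascPochhammer_succ_eval_left, Nat.factorial_succ]
  push_cast
  field_simp

lemma twoFZero_add_one_left_sub_add_one_right (a b : K) :
    twoFZero (a + 1) b - twoFZero a (b + 1) =
      (b - a) • (X * twoFZero (a + 1) (b + 1)) := by
  ext k
  cases k with
  | zero => simp [twoFZero]
  | succ k =>
    simp only [map_sub, coeff_smul, smul_eq_mul, coeff_succ_X_mul, coeff_twoFZero]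
    rw [ascPochhammer_succ_eval_left a, ascPochhammer_succ_eval_left b,
      ascPochhammer_succ_eval k (a + 1), ascPochhammer_succ_eval k (b + 1), Nat.factorial_succ]
    push_cast
    field_simp
    ring

lemma smul_X_sq_mul_twoFZero (a b : K) :
    ((b - a + 1) * (b - a) * (b - a - 1)) • (X ^ 2 * twoFZero (a + 1) (b + 1)) =
      (b - a - 1) • twoFZero (a - 1) (b + 1) - (2 * (b - a)) • twoFZero a b +
        (b - a + 1) • twoFZero (a + 1) (b - 1) := by
  have center := twoFZero_add_one_left_sub_add_one_right a b
  have lower : twoFZero a b - twoFZero (a - 1) (b + 1) =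
      (b - a + 1) • (X * twoFZero a (b + 1)) := by
    convert twoFZero_add_one_left_sub_add_one_right (a - 1) b using 2 <;> ring_nf
  have upper : twoFZero (a + 1) (b - 1) - twoFZero a b =
      (b - a - 1) • (X * twoFZero (a + 1) b) := by
    convert twoFZero_add_one_left_sub_add_one_right a (b - 1) using 2 <;> ring_nf
  simp only [smul_eq_C_mul, map_mul, map_add, map_sub, map_one, map_ofNat]
    at center lower upper ⊢
  linear_combination
    -(C b - C a + 1) * (C b - C a - 1) * X * center + (C b - C a - 1) * lower
      - (C b - C a + 1) * upper

theorem mixed_relation_family_V_general (lam mu s : K)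
    (hden : (2 * s + lam + mu) * (2 * s + lam + mu - 1) * (2 * s + lam + mu - 2) ≠ 0) :
    -(X ^ 2 * d⁄dX K (twoFZero (1 - lam - s) (mu + s))) =
      (((s + mu) * (s + lam - 1)) / ((2 * s + lam + mu) * (2 * s + lam + mu - 1))) •
          twoFZero (1 - lam - (s + 1)) (mu + (s + 1)) -
        ((2 * ((s + mu) * (s + lam - 1))) / ((2 * s + lam + mu) * (2 * s + lam + mu - 2))) •
          twoFZero (1 - lam - s) (mu + s) +
        (((s + mu) * (s + lam - 1)) / ((2 * s + lam + mu - 1) * (2 * s + lam + mu - 2))) •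
          twoFZero (1 - lam - (s - 1)) (mu + (s - 1)) := by
  obtain ⟨⟨h0, h1⟩, h2⟩ : (2 * s + lam + mu ≠ 0 ∧ 2 * s + lam + mu - 1 ≠ 0) ∧
      2 * s + lam + mu - 2 ≠ 0 := by
    simpa only [mul_ne_zero_iff] using hden
  set p := (s + mu) * (s + lam - 1) with hp
  have hrec := smul_X_sq_mul_twoFZero (1 - lam - s) (mu + s)
  rw [show mu + s - (1 - lam - s) = 2 * s + lam + mu - 1 by ring,
    show 2 * s + lam + mu - 1 + 1 = 2 * s + lam + mu by ring,
    show 2 * s + lam + mu - 1 - 1 = 2 * s + lam + mu - 2 by ring] at hrec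
  rw [derivative_twoFZero, show (1 - lam - s) * (mu + s) = -p by rw [hp]; ring,
    mul_smul_comm, neg_smul, neg_neg, eq_inv_smul_iff₀ hden |>.mpr hrec]
  rw [← sub_sub, ← add_assoc, ← sub_add, ← add_sub_assoc]
  match_scalars <;> field_simp

end HypergeometricTwoFZero

lemma poch_eq_ascPochhammer_eval (a : ℂ) (k : ℕ) : poch a k = (ascPochhammer ℂ k).eval a := by
  induction k with
  | zero => simp [poch]
  | succ k ih => rw [poch, ih, ascPochhammer_succ_eval]

lemma Fser_eq_twoFZero (lam mu : ℂ) (n : ℕ) :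
    Fser lam mu n = twoFZero (1 - lam - n) (mu + n) := by
  ext k
  simp only [Fser, coeff_mk, coeff_twoFZero, poch_eq_ascPochhammer_eval]
  ring

/-- Mixed difference-differential equation for family V with `(p,q,m) = (0,0,1)`. -/
theorem mixed_relation_family_V (lam mu : ℂ)
    (hden : ∀ n : ℕ, 1 ≤ n →
      (2 * (n : ℂ) + lam + mu) * (2 * (n : ℂ) + lam + mu - 1) *
        (2 * (n : ℂ) + lam + mu - 2) ≠ 0) :
    ∀ n : ℕ, 1 ≤ n →
      -(PowerSeries.X ^ 2 * PowerSeries.derivativeFun (Fser lam mu n)) =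
        ((((n : ℂ) + mu) * ((n : ℂ) + lam - 1)) /
            ((2 * (n : ℂ) + lam + mu) * (2 * (n : ℂ) + lam + mu - 1))) •
            Fser lam mu (n + 1) -
          ((2 * (((n : ℂ) + mu) * ((n : ℂ) + lam - 1))) /
            ((2 * (n : ℂ) + lam + mu) * (2 * (n : ℂ) + lam + mu - 2))) •
            Fser lam mu n +
          ((((n : ℂ) + mu) * ((n : ℂ) + lam - 1)) /
            ((2 * (n : ℂ) + lam + mu - 1) * (2 * (n : ℂ) + lam + mu - 2))) •
            Fser lam mu (n - 1) := by
  intro n hn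
  simp only [Fser_eq_twoFZero, Nat.cast_add_one, Nat.cast_pred hn]
  exact mixed_relation_family_V_general lam mu n (hden n hn)
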